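/- For every natural number n, dim_{F₂} HH_{n+4}(A(1), A(1)) = dim_{F₂} HH_n(A(1), A(1)) + 8; that is, the Hochschild homology of A(1) is periodic of period 4 up to a shift of 8 in dimension. -/

import Mathlib

open TensorProduct MulOpposite CategoryTheory

section Machinery

variable (k : Type) [CommRing k] (S : Type) [Ring S] [Algebra k S] (P : Set (S × S))

/-- The `k`-submodule of (the restriction of scalars of) an `S`-module `N` generated by all
differences `p.1 • n - p.2 • n` for pairs `p ∈ P` and `n ∈ N`. -/
noncomputable def relSub (N : ModuleCat S) :
    Submodule k ((ModuleCat.restrictScalars (algebraMap k S)).obj N) :=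
  Submodule.span k {x | ∃ p ∈ P, ∃ n : N, x = p.1 • n - p.2 • n}

/-- The "coinvariants"-type additive functor sending an `S`-module `N` to its quotient,
as a `k`-module, by the span of all elements `p.1 • n - p.2 • n` for `p ∈ P`, `n ∈ N`. -/
noncomputable def coinvFunctor : ModuleCat S ⥤ ModuleCat k where
  obj N := ModuleCat.of k (((ModuleCat.restrictScalars (algebraMap k S)).obj N) ⧸ relSub k S P N)
  map {N N'} f := ModuleCat.ofHom <| Submodule.mapQ (relSub k S P N) (relSub k S P N')
      ((ModuleCat.restrictScalars (algebraMap k S)).map f).hom (by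
    rw [relSub, Submodule.span_le]
    rintro x ⟨p, hp, n, rfl⟩
    have : ((ModuleCat.restrictScalars (algebraMap k S)).map f) (p.1 • n - p.2 • n)
        = p.1 • (f n) - p.2 • (f n) := by
      show f (p.1 • n - p.2 • n) = _
      rw [map_sub, f.hom.map_smul, f.hom.map_smul]
    change ((ModuleCat.restrictScalars (algebraMap k S)).map f) (p.1 • n - p.2 • n)
        ∈ relSub k S P N'
    exact Submodule.subset_span ⟨p, hp, f n, this⟩)
  map_id _ := ModuleCat.hom_ext <| Submodule.linearMap_qext _ (LinearMap.ext fun _ => rfl)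
  map_comp _ _ := ModuleCat.hom_ext <| Submodule.linearMap_qext _ (LinearMap.ext fun _ => rfl)

instance : (coinvFunctor k S P).Additive where
  map_add := ModuleCat.hom_ext <| Submodule.linearMap_qext _ (LinearMap.ext fun _ => rfl)

end Machinery

/-- Hochschild homology `HH_n(A, A)` of a `k`-algebra `A`: the `n`-th left derived functor
(that is, `Tor_n` over the enveloping algebra `A ⊗[k] Aᵐᵒᵖ`) of the coinvariants functor
`N ↦ N / span { a•n - n•a }` (which is naturally isomorphic to `A ⊗_{A ⊗[k] Aᵐᵒᵖ} -`),
evaluated at the `A`-bimodule `A` itself. -/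
noncomputable def HochschildHomology (k : Type) [CommRing k] (A : Type) [Ring A] [Algebra k A]
    (n : ℕ) : ModuleCat k :=
  letI : Module (A ⊗[k] Aᵐᵒᵖ) A := TensorProduct.Algebra.module
  ((coinvFunctor k (A ⊗[k] Aᵐᵒᵖ)
      {p | ∃ a : A, p = (a ⊗ₜ[k] (1 : Aᵐᵒᵖ), (1 : A) ⊗ₜ[k] op a)}).leftDerived n).obj
    (ModuleCat.of (A ⊗[k] Aᵐᵒᵖ) A)

/-- The relations defining `A(1)`: `Sq¹·Sq¹ = 0` and `Sq²·Sq² + Sq¹·Sq²·Sq¹ = 0`. -/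
inductive A1Rel : FreeAlgebra (ZMod 2) (Fin 2) → FreeAlgebra (ZMod 2) (Fin 2) → Prop
  | sq1 : A1Rel (FreeAlgebra.ι (ZMod 2) 0 * FreeAlgebra.ι (ZMod 2) 0) 0
  | sq2 : A1Rel (FreeAlgebra.ι (ZMod 2) 1 * FreeAlgebra.ι (ZMod 2) 1 +
      FreeAlgebra.ι (ZMod 2) 0 * FreeAlgebra.ι (ZMod 2) 1 * FreeAlgebra.ι (ZMod 2) 0) 0

/-- `A(1)`, the subalgebra of the mod 2 Steenrod algebra generated by `Sq¹` and `Sq²`, presented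
as the quotient of the free `F₂`-algebra on two generators `Sq1, Sq2` by the two-sided ideal
generated by `Sq1·Sq1` and `Sq2·Sq2 + Sq1·Sq2·Sq1`. -/
abbrev A1 : Type := RingQuot A1Rel

/-- The image of `Sq¹` in `A(1)`. -/
noncomputable def Sq1 : A1 := RingQuot.mkAlgHom (ZMod 2) A1Rel (FreeAlgebra.ι (ZMod 2) 0)

/-- The image of `Sq²` in `A(1)`. -/
noncomputable def Sq2 : A1 := RingQuot.mkAlgHom (ZMod 2) A1Rel (FreeAlgebra.ι (ZMod 2) 1)

/-- Milnor's element `Q₀ = Sq¹·Sq² + Sq²·Sq¹` in `A(1)`. -/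
noncomputable def Q0 : A1 := Sq1 * Sq2 + Sq2 * Sq1

/-!
Write `A = A(1)`, `x = Sq¹`, `y = Sq²` and `Aᵉ = A ⊗ Aᵒᵖ`. The minimal free resolution of `𝔽₂` over
`A` has an explicit form which repeats itself every four degrees, apart from two new generators.
The map `A → Aᵉ` with `x ↦ x ⊗ 1 + 1 ⊗ x` and `y ↦ y ⊗ 1 + x ⊗ x + 1 ⊗ y` is an algebra map along
which `Aᵉ` is free, and `Aᵉ ⊗_A 𝔽₂ = A`, so that this resolution induces one of `A` over `Aᵉ`. Its
coinvariants form the same complex, on copies of the vector space `A`, with the operators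
`X c = x c + c x` and `Y c = y c + x c x + c y` in the places of `x` and `y`. As `Y X = 0` and `X`
has rank `2`, four degrees up there are `2 · 8` more dimensions and both adjacent differentials have
rank `2 · 2` higher, so the homology grows by `16 - 4 - 4 = 8`.
-/

/-! ### The minimal resolution over `A(1)` -/

/-- The defining relations of `A(1)`, for a pair of elements standing for `Sq¹` and `Sq²`. The
second one is `y² = xyx`, which agrees with `y² + xyx = 0` in characteristic two. -/
structure SteenrodPair {R : Type*} [MonoidWithZero R] (x y : R) : Prop where
  mul_self_left : x * x = 0
  mul_self_right : y * y = x * (y * x)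

namespace SteenrodPair

variable {T N : Type*} [Semiring T] [AddCommMonoid N] [Module T N] {X Y : Module.End T N}
  (h : SteenrodPair X Y)
include h

lemma apply_left (a : N) : X (X a) = 0 := LinearMap.congr_fun h.mul_self_left a

lemma apply_right (a : N) : Y (Y a) = X (Y (X a)) := LinearMap.congr_fun h.mul_self_right a

lemma apply_word_right (a : N) : Y (X (Y (Y a))) = 0 := by
  rw [h.apply_right, h.apply_left, map_zero]

lemma apply_braid (a : N) : Y (X (Y (X a))) = X (Y (X (Y a))) := by
  rw [← h.apply_right, h.apply_right]

end SteenrodPair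

/-- `Cell (n + 1)` indexes the generators in degree `n` of the minimal free resolution of `𝔽₂` over
`A(1)`, and `Cell 0` is empty. The shift puts the start of the resolution on the same footing as
the other degrees. -/
abbrev Cell : ℕ → Type
  | 0 => Fin 0
  | 1 => Fin 1
  | 2 => Fin 2
  | 3 => Fin 2
  | n + 4 => Fin 2 ⊕ Cell n

/-- A contraction of the minimal resolution over `A(1)`, in a form that lives in any ring
containing a Steenrod pair: the elements `S`, `e`, `t`, `b`, `c` are the entries of a contracting
homotopy, and the equations say that the homotopy contracts the complex in positive degrees. In
their names `word` stands for `Y * X * Y`. -/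
structure Contraction {R : Type*} [Ring R] (X Y : R) where
  (S e t b c : R)
  X_mul_S_add : X * S + S * X = 1
  e_mul_X : e * X = 0
  t_mul_X : t * X = 0
  X_mul_S_add_Y_mul_t_add : X * S + Y * t + e * (Y * X * Y) = 1
  S_mul_word_add : S * (Y * X * Y) + Y * X * Y * S = 0
  Y_mul_b_add : Y * b + t * Y = 1
  Y_mul_X_mul_b_add : Y * X * b + S * Y = 0
  Y_mul_X_mul_c_add : Y * X * c + b * Y = 1
  word_mul_c_add : Y * X * Y * c + S * (Y * X) = 0
  X_mul_S_add_word_mul_e_add : X * S + Y * X * Y * e + c * (Y * X) = 1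

namespace Contraction

/-- The image of a contraction under a ring homomorphism. -/
def map {R R' : Type*} [Ring R] [Ring R'] {X Y : R} {X' Y' : R'} (C : Contraction X Y)
    (φ : R →+* R') (hX : φ X = X') (hY : φ Y = Y') : Contraction X' Y' where
  S := φ C.S
  e := φ C.e
  t := φ C.t
  b := φ C.b
  c := φ C.c
  X_mul_S_add := by simpa [← hX, ← hY] using congrArg φ C.X_mul_S_add
  e_mul_X := by simpa [← hX, ← hY] using congrArg φ C.e_mul_X
  t_mul_X := by simpa [← hX, ← hY] using congrArg φ C.t_mul_X
  X_mul_S_add_Y_mul_t_add := by simpa [← hX, ← hY] using congrArg φ C.X_mul_S_add_Y_mul_t_add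
  S_mul_word_add := by simpa [← hX, ← hY] using congrArg φ C.S_mul_word_add
  Y_mul_b_add := by simpa [← hX, ← hY] using congrArg φ C.Y_mul_b_add
  Y_mul_X_mul_b_add := by simpa [← hX, ← hY] using congrArg φ C.Y_mul_X_mul_b_add
  Y_mul_X_mul_c_add := by simpa [← hX, ← hY] using congrArg φ C.Y_mul_X_mul_c_add
  word_mul_c_add := by simpa [← hX, ← hY] using congrArg φ C.word_mul_c_add
  X_mul_S_add_word_mul_e_add := by simpa [← hX, ← hY] using congrArg φ C.X_mul_S_add_word_mul_e_add

section

variable {T N : Type*} [Ring T] [AddCommGroup N] [Module T N] {X Y : Module.End T N}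
  (C : Contraction X Y) (a b : N)

lemma apply_add :
    X (C.S a) + Y (X (Y (C.S b))) + C.S (X a + Y (X (Y b))) = a := by
  have hX : X (C.S a) + C.S (X a) = a := LinearMap.congr_fun C.X_mul_S_add a
  have hS : C.S (Y (X (Y b))) + Y (X (Y (C.S b))) = 0 := LinearMap.congr_fun C.S_mul_word_add b
  grind

lemma apply_add_of_degree_one_fst :
    X (C.S a) + Y (X (C.b b)) + C.S (X a + Y b) = a := by
  have hX : X (C.S a) + C.S (X a) = a := LinearMap.congr_fun C.X_mul_S_add a
  have hb : Y (X (C.b b)) + C.S (Y b) = 0 := LinearMap.congr_fun C.Y_mul_X_mul_b_add b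
  grind

lemma apply_add_of_degree_one_snd : Y (C.b b) + C.t (X a + Y b) = b := by
  have ht : C.t (X a) = 0 := LinearMap.congr_fun C.t_mul_X a
  have hb : Y (C.b b) + C.t (Y b) = b := LinearMap.congr_fun C.Y_mul_b_add b
  grind

lemma apply_add_of_degree_two :
    X (C.S a) + Y (X (Y (C.c b))) + C.S (X a + Y (X b)) = a := by
  have hX : X (C.S a) + C.S (X a) = a := LinearMap.congr_fun C.X_mul_S_add a
  have hc : Y (X (Y (C.c b))) + C.S (Y (X b)) = 0 := LinearMap.congr_fun C.word_mul_c_add b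
  grind

lemma apply_add_of_degree_four :
    X (C.S b) + Y (C.t b) + C.e (X a + Y (X (Y b))) = b := by
  have he : C.e (X a) = 0 := LinearMap.congr_fun C.e_mul_X a
  have hX : X (C.S b) + Y (C.t b) + C.e (Y (X (Y b))) = b :=
    LinearMap.congr_fun C.X_mul_S_add_Y_mul_t_add b
  grind

end

end Contraction

section FinrankRange

open Module LinearMap

variable {k M N P : Type*} [Field k] [AddCommGroup M] [Module k M] [AddCommGroup N] [Module k N]
  [AddCommGroup P] [Module k P]

lemma finrank_range_comp_eq {i : N →ₗ[k] P} {p : M →ₗ[k] N} (hi : Function.Injective i)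
    (hp : Function.Surjective p) : finrank k (range (i ∘ₗ p)) = finrank k N := by
  rw [range_comp_of_range_eq_top i (range_eq_top.2 hp), finrank_range_of_inj hi]

end FinrankRange

namespace Cell

instance finite : ∀ n, Finite (Cell n)
  | 0 => inferInstanceAs (Finite (Fin 0))
  | 1 => inferInstanceAs (Finite (Fin 1))
  | 2 => inferInstanceAs (Finite (Fin 2))
  | 3 => inferInstanceAs (Finite (Fin 2))
  | n + 4 => haveI := finite n; inferInstanceAs (Finite (Fin 2 ⊕ Cell n))

/-- The generator of lowest internal degree in homological degree `n`. -/
def bottom : ∀ n, Cell (n + 1)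
  | 0 => (0 : Fin 1)
  | 1 => (0 : Fin 2)
  | 2 => (0 : Fin 2)
  | _ + 3 => Sum.inl 0

section Differential

variable {T N : Type*} [Semiring T] [AddCommMonoid N] [Module T N]

open LinearMap in
/-- The differential from degree `n` to degree `n - 1` of the resolution of `𝔽₂` over `A(1)`, with
operators `X` and `Y` on a module `N` in place of multiplication by `Sq¹` and `Sq²`. -/
def diff (X Y : Module.End T N) : ∀ n, (Cell (n + 1) → N) →ₗ[T] (Cell n → N)
  | 0 => 0
  | 1 => pi fun _ : Fin 1 ↦ X ∘ₗ proj (0 : Fin 2) + Y ∘ₗ proj (1 : Fin 2)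
  | 2 => pi ![X ∘ₗ proj (0 : Fin 2) + (Y * X) ∘ₗ proj (1 : Fin 2), Y ∘ₗ proj (1 : Fin 2)]
  | 3 => pi ![X ∘ₗ proj (.inl 0 : Fin 2 ⊕ Fin 0) + (Y * X * Y) ∘ₗ proj (.inl 1),
      (Y * X) ∘ₗ proj (.inl 1)]
  | n + 4 => pi (Sum.elim
      ![X ∘ₗ proj (.inl 0 : Fin 2 ⊕ Cell (n + 1)) + (Y * X * Y) ∘ₗ proj (.inl 1),
        X ∘ₗ proj (.inl 1) + (Y * X * Y) ∘ₗ proj (.inr (bottom n))]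
      fun j ↦ proj j ∘ₗ diff X Y n ∘ₗ funLeft T N .inr)

variable (X Y : Module.End T N)

lemma diff_one (f : Cell 2 → N) : diff X Y 1 f = fun _ : Fin 1 ↦ X (f 0) + Y (f 1) := rfl

lemma diff_two (f : Cell 3 → N) : diff X Y 2 f = ![X (f 0) + Y (X (f 1)), Y (f 1)] :=
  funext fun i : Fin 2 ↦ by fin_cases i <;> rfl

lemma diff_three (f : Cell 4 → N) :
    diff X Y 3 f = ![X (f (.inl 0)) + Y (X (Y (f (.inl 1)))), Y (X (f (.inl 1)))] :=
  funext fun i : Fin 2 ↦ by fin_cases i <;> rfl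

lemma diff_add_four (n : ℕ) (f : Cell (n + 5) → N) :
    diff X Y (n + 4) f = Sum.elim
      ![X (f (.inl 0)) + Y (X (Y (f (.inl 1)))), X (f (.inl 1)) + Y (X (Y (f (.inr (bottom n)))))]
      (diff X Y n (f ∘ .inr)) :=
  funext fun i : Fin 2 ⊕ Cell n ↦ by
    rcases i with i | i
    · fin_cases i <;> rfl
    · rfl

variable {X Y}

theorem diff_map {T' N' : Type*} [Semiring T'] [AddCommMonoid N'] [Module T' N']
    {X' Y' : Module.End T' N'} (φ : N →+ N')
    (hX : ∀ a, φ (X a) = X' (φ a)) (hY : ∀ a, φ (Y a) = Y' (φ a)) :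
    ∀ n f, diff X' Y' n (φ ∘ f) = φ ∘ diff X Y n f
  | 0, _ => funext fun i : Fin 0 ↦ i.elim0
  | 1, f => by rw [diff_one, diff_one]; simp [hX, hY, Function.comp_def]
  | 2, f => by rw [diff_two, diff_two]; ext i; fin_cases i <;> simp [hX, hY]
  | 3, f => by rw [diff_three, diff_three]; ext i; fin_cases i <;> simp [hX, hY]
  | n + 4, f => by
    rw [diff_add_four, diff_add_four, Function.comp_assoc, diff_map φ hX hY n, Sum.comp_elim]
    congr 1; ext i; fin_cases i <;> simp [hX, hY]

lemma word_diff_bottom (h : SteenrodPair X Y) (n : ℕ) (f : Cell (n + 2) → N) :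
    Y (X (Y (diff X Y (n + 1) f (bottom n)))) = X (Y (X (Y (f (bottom (n + 1)))))) := by
  rcases n with _ | _ | _ | n
  on_goal 1 => rw [diff_one]
  on_goal 2 => rw [diff_two]
  on_goal 3 => rw [diff_three]
  on_goal 4 => rw [diff_add_four]
  all_goals simp [bottom, h.apply_word_right, h.apply_braid]

end Differential

section AddCommGroup

variable {T N : Type*} [Semiring T] [AddCommGroup N] [Module T N] {X Y : Module.End T N}

theorem diff_diff [Module (ZMod 2) N] (h : SteenrodPair X Y) :
    ∀ n f, diff X Y n (diff X Y (n + 1) f) = 0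
  | 0, _ => rfl
  | 1, f => by
    rw [diff_one, diff_two]
    ext
    simp [h.apply_left, h.apply_right, ZModModule.add_self]
  | 2, f => by
    rw [diff_two, diff_three]
    ext i
    fin_cases i <;> simp [h.apply_left, h.apply_right, h.apply_braid, ZModModule.add_self]
  | 3, f => by
    rw [diff_three, diff_add_four]
    ext i
    fin_cases i <;>
      simp [h.apply_left, h.apply_word_right, h.apply_braid, ZModModule.add_self]
  | n + 4, f => by
    rw [diff_add_four, diff_add_four]
    ext (i | j)
    · fin_cases i <;>
        simp [h.apply_left, h.apply_word_right, h.apply_braid, ZModModule.add_self,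
          word_diff_bottom h]
    · exact congrFun (diff_diff h n (f ∘ Sum.inr)) j

end AddCommGroup

section Homotopy

variable {T N : Type*} [Ring T] [AddCommGroup N] [Module T N] {X Y : Module.End T N}
  (C : Contraction X Y)

/-- The contracting homotopy of `diff` with entries `C`, from degree `n` to degree `n + 1`. -/
def homotopy : ∀ n, (Cell (n + 1) → N) → Cell (n + 2) → N
  | 0, f => ![C.S (f (0 : Fin 1)), C.t (f (0 : Fin 1))]
  | 1, f => ![C.S (f (0 : Fin 2)), C.b (f (1 : Fin 2))]
  | 2, f => Sum.elim ![C.S (f (0 : Fin 2)), C.c (f (1 : Fin 2))] fun i : Fin 0 ↦ i.elim0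
  | 3, f => Sum.elim ![C.S (f (.inl 0)), C.S (f (.inl 1))] fun _ : Fin 1 ↦ C.e (f (.inl 1))
  | n + 4, f => Sum.elim ![C.S (f (.inl 0)), C.S (f (.inl 1))] (homotopy n (f ∘ .inr))

lemma homotopy_bottom : ∀ n (f : Cell (n + 1) → N),
    homotopy C n f (bottom (n + 1)) = C.S (f (bottom n))
  | 0, _ | 1, _ | 2, _ | 3, _ | _ + 4, _ => rfl

theorem diff_homotopy_add : ∀ n (f : Cell (n + 2) → N),
    diff X Y (n + 2) (homotopy C (n + 1) f) + homotopy C n (diff X Y (n + 1) f) = f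
  | 0, f => by
    rw [diff_one, diff_two]
    exact funext (Fin.forall_fin_two.2 ⟨C.apply_add_of_degree_one_fst _ _,
      C.apply_add_of_degree_one_snd _ _⟩)
  | 1, f => by
    rw [diff_two, diff_three]
    exact funext (Fin.forall_fin_two.2 ⟨C.apply_add_of_degree_two _ _,
      LinearMap.congr_fun C.Y_mul_X_mul_c_add _⟩)
  | 2, f => by
    rw [diff_three, diff_add_four]
    exact funext (Sum.forall.2 ⟨Fin.forall_fin_two.2 ⟨C.apply_add _ _,
      LinearMap.congr_fun C.X_mul_S_add_word_mul_e_add _⟩, fun i : Fin 0 ↦ i.elim0⟩)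
  | 3, f => by
    rw [diff_add_four, diff_add_four]
    exact funext (Sum.forall.2 ⟨Fin.forall_fin_two.2 ⟨C.apply_add _ _, C.apply_add _ _⟩,
      Fin.forall_fin_one.2 (C.apply_add_of_degree_four _ _)⟩)
  | n + 4, f => by
    rw [diff_add_four, diff_add_four]
    refine funext (Sum.forall.2 ⟨Fin.forall_fin_two.2 ⟨C.apply_add _ _, ?_⟩,
      congrFun (diff_homotopy_add n (f ∘ Sum.inr))⟩)
    have hS : homotopy C (n + 5) f (.inr (bottom (n + 2))) = C.S (f (.inr (bottom (n + 1)))) :=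
      homotopy_bottom C (n + 1) (f ∘ .inr)
    change _ + Y (X (Y (homotopy C (n + 5) f (.inr (bottom (n + 2)))))) + _ = _
    rw [hS]
    exact C.apply_add _ _

lemma homotopy_zero : ∀ n, homotopy C n 0 = 0
  | 0 | 1 => funext (Fin.forall_fin_two.2 ⟨map_zero _, map_zero _⟩)
  | 2 => funext (Sum.forall.2 ⟨Fin.forall_fin_two.2 ⟨map_zero _, map_zero _⟩,
      fun i : Fin 0 ↦ i.elim0⟩)
  | 3 => funext (Sum.forall.2 ⟨Fin.forall_fin_two.2 ⟨map_zero _, map_zero _⟩,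
      fun _ : Fin 1 ↦ map_zero _⟩)
  | n + 4 => funext (Sum.forall.2 ⟨Fin.forall_fin_two.2 ⟨map_zero _, map_zero _⟩,
      congrFun (homotopy_zero n)⟩)

include C in
theorem exists_diff_eq (n : ℕ) (f : Cell (n + 2) → N) (hf : diff X Y (n + 1) f = 0) :
    ∃ g, diff X Y (n + 2) g = f :=
  ⟨homotopy C (n + 1) f, by simpa only [hf, homotopy_zero, add_zero] using diff_homotopy_add C n f⟩

include C in
theorem exists_diff_one_eq (f : Cell 1 → N) (hf : C.e (Y (X (Y (f 0)))) = 0) :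
    ∃ g, diff X Y 1 g = f := by
  have hS : X (C.S (f 0)) + Y (C.t (f 0)) + C.e (Y (X (Y (f 0)))) = f 0 :=
    LinearMap.congr_fun C.X_mul_S_add_Y_mul_t_add (f 0)
  exact ⟨homotopy C 0 f, funext (Fin.forall_fin_one.2 (by rwa [hf, add_zero] at hS))⟩

end Homotopy

section Rank

open Module

variable {k N : Type*} [Field k] [AddCommGroup N] [Module k N] [Module.Finite k N]

lemma finrank_arrow_add_four (n : ℕ) :
    finrank k (Cell (n + 4) → N) = finrank k (Cell n → N) + 2 * finrank k N := by
  rw [(LinearEquiv.sumArrowLequivProdArrow (Fin 2) (Cell n) k N).finrank_eq, finrank_prod]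
  simp [finrank_pi_fintype, add_comm]

theorem finrank_range_diff_add_four {X Y : Module.End k N} (h : Y * X = 0) (n : ℕ) :
    finrank k (LinearMap.range (diff X Y (n + 4))) =
      finrank k (LinearMap.range (diff X Y n)) + 2 * finrank k (LinearMap.range X) := by
  have hYX (a : N) : Y (X a) = 0 := LinearMap.congr_fun h a
  let d := diff X Y n
  let p := (X.rangeRestrict.compLeft (Fin 2)).prodMap d.rangeRestrict
  let i := ((LinearMap.range X).subtype.compLeft (Fin 2)).prodMap (LinearMap.range d).subtype
  let e m := LinearEquiv.sumArrowLequivProdArrow (Fin 2) (Cell m) k N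
  have hp : Function.Surjective p :=
    X.surjective_rangeRestrict.comp_left.prodMap d.surjective_rangeRestrict
  have hi : Function.Injective i :=
    (LinearMap.range X).subtype_injective.comp_left.prodMap (LinearMap.range d).subtype_injective
  have hip : diff X Y (n + 4) =
      ((e n).symm.toLinearMap ∘ₗ i) ∘ₗ (p ∘ₗ (e (n + 1)).toLinearMap) := by
    refine LinearMap.ext fun f ↦ ?_
    rw [diff_add_four]
    refine funext (Sum.forall.2 ⟨Fin.forall_fin_two.2 ⟨?_, ?_⟩, fun _ ↦ rfl⟩) <;>
      simp [hYX, e, i, p]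
  rw [hip, finrank_range_comp_eq, finrank_prod]
  · simp [finrank_pi_fintype, add_comm, d]
  · exact (e n).symm.injective.comp hi
  · exact hp.comp (e (n + 1)).surjective

end Rank

end Cell

/-! ### Homology of complexes of modules -/

universe u v

section Resolution

variable {T : Type u} [Ring T] {M : ℕ → Type v} [∀ n, AddCommGroup (M n)] [∀ n, Module T (M n)]
  {d : ∀ n, M (n + 1) →ₗ[T] M n} (hd : ∀ n, Function.Exact (d (n + 1)) (d n))

/-- The chain complex of modules given by an exact sequence `⋯ → M 2 → M 1 → M 0`. -/
noncomputable def complexOfExact : ChainComplex (ModuleCat T) ℕ :=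
  .of (fun n ↦ .of T (M n)) (fun n ↦ ModuleCat.ofHom (d n))
    fun n ↦ ModuleCat.hom_ext (hd n).linearMap_comp_eq_zero

lemma complexOfExact_d (n : ℕ) : (complexOfExact hd).d (n + 1) n = ModuleCat.ofHom (d n) :=
  ChainComplex.of_d (fun n ↦ ModuleCat.of T (M n)) (fun n ↦ ModuleCat.ofHom (d n)) n

lemma exactAt_complexOfExact (n : ℕ) : (complexOfExact hd).ExactAt (n + 1) := by
  rw [HomologicalComplex.exactAt_iff' _ (n + 2) (n + 1) n (by simp) (by simp)]
  refine ModuleCat.shortComplex_exact _ ?_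
  change Function.Exact ((complexOfExact hd).d (n + 2) (n + 1)) ((complexOfExact hd).d (n + 1) n)
  rw [complexOfExact_d, complexOfExact_d]
  exact hd n

variable {N : Type v} [AddCommGroup N] [Module T N] {ε : M 0 →ₗ[T] N}
  (hε : Function.Exact (d 0) ε)

/-- The augmentation of `complexOfExact` given by extending the exact sequence to `N`. -/
noncomputable def augmentationOfExact :
    complexOfExact hd ⟶ (ChainComplex.single₀ (ModuleCat T)).obj (.of T N) :=
  (ChainComplex.toSingle₀Equiv _ _).symm ⟨ModuleCat.ofHom ε, by
    rw [complexOfExact_d]; exact ModuleCat.hom_ext hε.linearMap_comp_eq_zero⟩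

lemma augmentationOfExact_f_zero : (augmentationOfExact hd hε).f 0 = ModuleCat.ofHom ε :=
  ChainComplex.toSingle₀Equiv_symm_apply_f_zero _ _

variable (hsurj : Function.Surjective ε)

include hsurj in
lemma quasiIso_augmentationOfExact : QuasiIso (augmentationOfExact hd hε) where
  quasiIsoAt
    | 0 => by
      rw [ChainComplex.quasiIsoAt₀_iff, ShortComplex.quasiIso_iff_of_zeros'
        (hg₁ := (complexOfExact hd).shape _ _ (by simp)) (hf₂ := rfl) (hg₂ := rfl)]
      refine ⟨ModuleCat.shortComplex_exact _ ?_, ?_⟩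
      · change Function.Exact ((complexOfExact hd).d 1 0) ((augmentationOfExact hd hε).f 0)
        rwa [complexOfExact_d, augmentationOfExact_f_zero]
      · change Epi ((augmentationOfExact hd hε).f 0)
        rw [augmentationOfExact_f_zero]
        exact (ModuleCat.epi_iff_surjective _).2 hsurj
    | n + 1 => by
      rw [quasiIsoAt_iff_exactAt' _ _ (ChainComplex.exactAt_succ_single_obj _ _)]
      exact exactAt_complexOfExact hd n

/-- The projective resolution of `N` given by an exact sequence `⋯ → M 1 → M 0 → N → 0` of
modules, projective except for `N`. -/
noncomputable def projectiveResolutionOfExact [∀ n, Module.Projective T (M n)] :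
    ProjectiveResolution (ModuleCat.of T N) where
  complex := complexOfExact hd
  projective n := ModuleCat.projective_of_categoryTheory_projective (R := T) (.of T (M n))
  π := augmentationOfExact hd hε
  quasiIso := quasiIso_augmentationOfExact hd hε hsurj

end Resolution

section Homology

open Module

variable {k : Type u} [Field k]

lemma finrank_homology_add (S : ShortComplex (ModuleCat.{v} k)) [Module.Finite k S.X₂] :
    finrank k S.homology + finrank k (LinearMap.range S.f.hom) +
      finrank k (LinearMap.range S.g.hom) = finrank k S.X₂ := by
  have hquot : finrank k S.homology + finrank k (LinearMap.range S.moduleCatToCycles) =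
      finrank k (LinearMap.ker S.g.hom) := by
    rw [S.moduleCatHomologyIso.toLinearEquiv.finrank_eq]
    exact Submodule.finrank_quotient_add_finrank _
  have hrange : finrank k (LinearMap.range S.moduleCatToCycles) =
      finrank k (LinearMap.range S.f.hom) := by
    have hf : S.f.hom = (LinearMap.ker S.g.hom).subtype ∘ₗ S.moduleCatToCycles := rfl
    rw [hf, LinearMap.range_comp, Submodule.finrank_map_subtype_eq]
  rw [← hrange, hquot, add_comm, LinearMap.finrank_range_add_finrank_ker]

/-- The differentials `d n : M (n + 1) → M n` compute the ranks in a chain complex whose degree `n`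
part is `M (n + 1)`; starting from `M 0 = 0` avoids a special case for the degree zero. -/
lemma finrank_homology_add_of_equiv {M : ℕ → Type*} [∀ n, AddCommGroup (M n)]
    [∀ n, Module k (M n)] [∀ n, Module.Finite k (M n)] [Subsingleton (M 0)]
    {d : ∀ n, M (n + 1) →ₗ[k] M n} {C : ChainComplex (ModuleCat.{v} k) ℕ}
    (e : ∀ n, C.X n ≃ₗ[k] M (n + 1)) (he : ∀ n x, e n (C.d (n + 1) n x) = d (n + 1) (e (n + 1) x))
    (n : ℕ) :
    finrank k (C.homology n) + finrank k (LinearMap.range (d (n + 1))) +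
      finrank k (LinearMap.range (d n)) = finrank k (M (n + 1)) := by
  have hfin : Module.Finite k (C.X n) := .equiv (e n).symm
  have hrank {i j m : ℕ} (hi : i = m + 1) (hj : j = m) :
      finrank k (LinearMap.range (C.d i j).hom) = finrank k (LinearMap.range (d (m + 1))) := by
    subst hi hj
    have hcomp : (e j).toLinearMap ∘ₗ (C.d (j + 1) j).hom = d (j + 1) ∘ₗ (e (j + 1)).toLinearMap :=
      LinearMap.ext (he j)
    rw [← (e j).finrank_map_eq, ← LinearMap.range_comp, hcomp, LinearEquiv.range_comp]
  have hsc : Module.Finite k (C.sc n).X₂ := hfin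
  have hf : finrank k (LinearMap.range (C.sc n).f.hom) = finrank k (LinearMap.range (d (n + 1))) :=
    hrank (ChainComplex.prev _ n) rfl
  have hg : finrank k (LinearMap.range (C.sc n).g.hom) = finrank k (LinearMap.range (d n)) := by
    cases n with
    | zero =>
      have hzero : (C.sc 0).g = 0 := C.shape _ _ (by simp)
      rw [hzero, ModuleCat.hom_zero, LinearMap.range_zero, finrank_bot,
        finrank_zero_of_subsingleton]
    | succ m => exact hrank rfl (ChainComplex.next_nat_succ m)
  rw [← hf, ← hg, ← (e n).finrank_eq]
  exact finrank_homology_add (C.sc n)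

end Homology

/-! ### Coordinates on `A(1)` -/

namespace SteenrodPair

variable {R : Type*} [Ring R] {x y : R}

lemma left_mul_left_mul (h : SteenrodPair x y) (a : R) : x * (x * a) = 0 := by
  rw [← mul_assoc, h.mul_self_left, zero_mul]

lemma right_mul_right_mul (h : SteenrodPair x y) (a : R) : y * (y * a) = x * (y * (x * a)) := by
  rw [← mul_assoc, h.mul_self_right]
  simp only [mul_assoc]

lemma braid (h : SteenrodPair x y) : y * (x * (y * x)) = x * (y * (x * y)) := by
  rw [← h.mul_self_right, ← mul_assoc y y y, h.mul_self_right]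
  simp only [mul_assoc]

lemma braid_mul (h : SteenrodPair x y) (a : R) :
    y * (x * (y * (x * a))) = x * (y * (x * (y * a))) := by
  simpa only [mul_assoc] using congrArg (· * a) h.braid

lemma mulRight (h : SteenrodPair x y) :
    SteenrodPair (LinearMap.mulRight R x) (LinearMap.mulRight R y) where
  mul_self_left := by
    rw [Module.End.mul_eq_comp, ← LinearMap.mulRight_mul, h.mul_self_left,
      LinearMap.mulRight_zero_eq_zero]
  mul_self_right := by
    simp only [Module.End.mul_eq_comp, ← LinearMap.mulRight_mul, h.mul_self_right, mul_assoc]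

end SteenrodPair

section WordSum

variable {R : Type*} [Ring R] [Algebra (ZMod 2) R]

/-- The linear combination of the words `1, x, y, xy, yx, xyx, yxy, xyxy` in `x` and `y` with given
coefficients. These words form a basis of `A(1)`. -/
noncomputable def wordSum (x y : R) : (Fin 8 → ZMod 2) →ₗ[ZMod 2] R :=
  Fintype.linearCombination (ZMod 2) ![1, x, y, x * y, y * x, x * (y * x), y * (x * y),
    x * (y * (x * y))]

lemma wordSum_apply (x y : R) (v : Fin 8 → ZMod 2) :
    wordSum x y v = v 0 • 1 + v 1 • x + v 2 • y + v 3 • (x * y) + v 4 • (y * x) +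
      v 5 • (x * (y * x)) + v 6 • (y * (x * y)) + v 7 • (x * (y * (x * y))) := by
  simp [wordSum, Fintype.linearCombination_apply, Fin.sum_univ_eight]

lemma map_wordSum {R' : Type*} [Ring R'] [Algebra (ZMod 2) R'] (φ : R →ₐ[ZMod 2] R') (x y : R)
    (v : Fin 8 → ZMod 2) : φ (wordSum x y v) = wordSum (φ x) (φ y) v := by
  simp only [wordSum_apply, map_add, map_smul, map_mul, map_one]

lemma wordSum_smul_of_smul_eq_zero {M : Type*} [AddCommGroup M] [Module (ZMod 2) M] [Module R M]
    [IsScalarTower (ZMod 2) R M] {x y : R} {m : M} (hx : x • m = 0) (hy : y • m = 0)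
    (v : Fin 8 → ZMod 2) : wordSum x y v • m = v 0 • m := by
  simp [wordSum_apply, add_smul, mul_smul, hx, hy]

end WordSum

namespace Coord

open LinearMap

/-- Left multiplication by `Sq¹` on `A(1)`, in the coordinates of `wordSum`. -/
def mulLeftSq1 : Module.End (ZMod 2) (Fin 8 → ZMod 2) :=
  pi ![0, proj 0, 0, proj 2, 0, proj 4, 0, proj 6]

/-- Left multiplication by `Sq²` on `A(1)`, in the coordinates of `wordSum`. -/
def mulLeftSq2 : Module.End (ZMod 2) (Fin 8 → ZMod 2) :=
  pi ![0, 0, proj 0, 0, proj 1, proj 2, proj 3, proj 5]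

/-- Right multiplication by `Sq¹` on `A(1)`, in the coordinates of `wordSum`. -/
def mulRightSq1 : Module.End (ZMod 2) (Fin 8 → ZMod 2) :=
  pi ![0, proj 0, 0, 0, proj 2, proj 3, 0, proj 6]

/-- Right multiplication by `Sq²` on `A(1)`, in the coordinates of `wordSum`. -/
def mulRightSq2 : Module.End (ZMod 2) (Fin 8 → ZMod 2) :=
  pi ![0, 0, proj 0, proj 1, 0, proj 2, proj 4, proj 5]

lemma steenrodPair_mulLeft : SteenrodPair mulLeftSq1 mulLeftSq2 where
  mul_self_left := LinearMap.ext fun v ↦ funext <| by simp [mulLeftSq1, Fin.forall_fin_succ]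
  mul_self_right := LinearMap.ext fun v ↦ funext <| by
    simp [mulLeftSq1, mulLeftSq2, Fin.forall_fin_succ]

/-- A contraction of the minimal resolution over `A(1)` itself: `S`, `t`, `b` and `c` divide words
by `Sq¹`, `Sq²`, `Sq²` and `Sq²Sq¹` on the right where possible, and `e` divides by
`Sq²Sq¹Sq²`. -/
def contraction : Contraction mulRightSq1 mulRightSq2 where
  S := pi ![proj 1, 0, proj 4, proj 5, 0, 0, proj 7, 0]
  e := pi ![proj 6, 0, 0, 0, 0, 0, 0, 0]
  t := pi ![proj 2, proj 3, 0, 0, proj 6, 0, 0, 0]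
  b := pi ![proj 2, proj 3, proj 5, 0, proj 6, proj 7, 0, 0]
  c := pi ![proj 3, 0, proj 6, proj 7, 0, 0, 0, 0]
  X_mul_S_add := LinearMap.ext fun v ↦ funext <| by
    simp [mulRightSq1, Fin.forall_fin_succ]
  e_mul_X := LinearMap.ext fun v ↦ funext <| by
    simp [mulRightSq1, Fin.forall_fin_succ]
  t_mul_X := LinearMap.ext fun v ↦ funext <| by
    simp [mulRightSq1, Fin.forall_fin_succ]
  X_mul_S_add_Y_mul_t_add := LinearMap.ext fun v ↦ funext <| by
    simp [mulRightSq1, mulRightSq2, Fin.forall_fin_succ]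
  S_mul_word_add := LinearMap.ext fun v ↦ funext <| by
    simp [mulRightSq1, mulRightSq2, Fin.forall_fin_succ, ZModModule.add_self]
  Y_mul_b_add := LinearMap.ext fun v ↦ funext <| by
    simp [mulRightSq2, Fin.forall_fin_succ]
  Y_mul_X_mul_b_add := LinearMap.ext fun v ↦ funext <| by
    simp [mulRightSq1, mulRightSq2, Fin.forall_fin_succ, ZModModule.add_self]
  Y_mul_X_mul_c_add := LinearMap.ext fun v ↦ funext <| by
    simp [mulRightSq1, mulRightSq2, Fin.forall_fin_succ]
  word_mul_c_add := LinearMap.ext fun v ↦ funext <| by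
    simp [mulRightSq1, mulRightSq2, Fin.forall_fin_succ, ZModModule.add_self]
  X_mul_S_add_word_mul_e_add := LinearMap.ext fun v ↦ funext <| by
    simp [mulRightSq1, mulRightSq2, Fin.forall_fin_succ]

lemma contraction_e_word (v : Fin 8 → ZMod 2) :
    contraction.e (mulRightSq2 (mulRightSq1 (mulRightSq2 v))) = Pi.single 0 (v 0) :=
  funext <| by simp [contraction, mulRightSq1, mulRightSq2, Fin.forall_fin_succ]

variable {R : Type*} [Ring R] [Algebra (ZMod 2) R] {x y : R} (h : SteenrodPair x y)
  (v : Fin 8 → ZMod 2)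
include h

lemma wordSum_mulLeftSq1 : wordSum x y (mulLeftSq1 v) = x * wordSum x y v := by
  simp [wordSum_apply, mulLeftSq1, mul_add, h.mul_self_left, h.left_mul_left_mul]

lemma wordSum_mulLeftSq2 : wordSum x y (mulLeftSq2 v) = y * wordSum x y v := by
  simp [wordSum_apply, mulLeftSq2, mul_add, h.mul_self_right, h.right_mul_right_mul,
    h.left_mul_left_mul, h.mul_self_left, h.braid, h.braid_mul]

lemma wordSum_mulRightSq1 : wordSum x y (mulRightSq1 v) = wordSum x y v * x := by
  simp [wordSum_apply, mulRightSq1, add_mul, mul_assoc, h.mul_self_left, h.left_mul_left_mul,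
    h.braid]

lemma wordSum_mulRightSq2 : wordSum x y (mulRightSq2 v) = wordSum x y v * y := by
  simp [wordSum_apply, mulRightSq2, add_mul, mul_assoc, h.mul_self_right,
    h.left_mul_left_mul]

end Coord

namespace A1

lemma steenrodPair : SteenrodPair Sq1 Sq2 where
  mul_self_left := by simpa [Sq1] using RingQuot.mkAlgHom_rel (ZMod 2) A1Rel.sq1
  mul_self_right := by
    have hrel : Sq2 * Sq2 + Sq1 * (Sq2 * Sq1) = 0 := by
      simpa [Sq1, Sq2, mul_assoc] using RingQuot.mkAlgHom_rel (ZMod 2) A1Rel.sq2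
    rwa [add_eq_zero_iff_eq_neg, ZModModule.neg_eq_self] at hrel

section Lift

variable {R : Type*} [Ring R] [Algebra (ZMod 2) R] {x y : R} (h : SteenrodPair x y)

/-- The algebra map out of `A(1)` determined by the images `x` of `Sq¹` and `y` of `Sq²`. -/
noncomputable def lift : A1 →ₐ[ZMod 2] R :=
  RingQuot.liftAlgHom (ZMod 2) ⟨FreeAlgebra.lift (ZMod 2) ![x, y], fun
    | _, _, .sq1 => by simp [h.mul_self_left]
    | _, _, .sq2 => by simp [h.mul_self_right, mul_assoc, ZModModule.add_self]⟩

@[simp] lemma lift_Sq1 : lift h Sq1 = x := by simp [lift, Sq1]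

@[simp] lemma lift_Sq2 : lift h Sq2 = y := by simp [lift, Sq2]

end Lift

lemma smul_mem {M : Type*} [AddCommMonoid M] [Module (ZMod 2) M] [Module A1 M]
    [IsScalarTower (ZMod 2) A1 M] {p : Submodule (ZMod 2) M} (hSq1 : ∀ m ∈ p, Sq1 • m ∈ p)
    (hSq2 : ∀ m ∈ p, Sq2 • m ∈ p) (a : A1) {m : M} (hm : m ∈ p) : a • m ∈ p := by
  obtain ⟨u, rfl⟩ := RingQuot.mkAlgHom_surjective (ZMod 2) A1Rel a
  induction u using FreeAlgebra.induction generalizing m with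
  | grade0 r => rw [AlgHom.commutes, algebraMap_smul]; exact p.smul_mem r hm
  | grade1 i => fin_cases i; exacts [hSq1 m hm, hSq2 m hm]
  | mul u v hu hv => rw [map_mul, mul_smul]; exact hu (hv hm)
  | add u v hu hv => rw [map_add, add_smul]; exact p.add_mem (hu hm) (hv hm)

lemma wordSum_surjective : Function.Surjective (wordSum Sq1 Sq2) := by
  intro a
  have hone : (1 : A1) ∈ LinearMap.range (wordSum Sq1 Sq2) :=
    ⟨Pi.single 0 1, by simp [wordSum_apply]⟩
  have ha : a • (1 : A1) ∈ LinearMap.range (wordSum Sq1 Sq2) := by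
    refine smul_mem ?_ ?_ a hone
    · rintro _ ⟨v, rfl⟩; exact ⟨_, Coord.wordSum_mulLeftSq1 steenrodPair v⟩
    · rintro _ ⟨v, rfl⟩; exact ⟨_, Coord.wordSum_mulLeftSq2 steenrodPair v⟩
  rwa [smul_eq_mul, mul_one] at ha

/-- The left regular representation of `A(1)` recovers the coefficients of a sum of words. -/
lemma wordSum_injective : Function.Injective (wordSum Sq1 Sq2) := by
  have hleft (v : Fin 8 → ZMod 2) :
      lift Coord.steenrodPair_mulLeft (wordSum Sq1 Sq2 v) (Pi.single 0 1) = v := by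
    rw [map_wordSum, lift_Sq1, lift_Sq2, wordSum_apply]
    ext i
    fin_cases i <;> simp [Coord.mulLeftSq1, Coord.mulLeftSq2]
  exact Function.LeftInverse.injective
    (g := fun a ↦ lift Coord.steenrodPair_mulLeft a (Pi.single 0 1)) hleft

/-- The coordinates on `A(1)` in the basis `1, x, y, xy, yx, xyx, yxy, xyxy` for `x = Sq¹` and
`y = Sq²`. -/
noncomputable def wordEquiv : (Fin 8 → ZMod 2) ≃ₗ[ZMod 2] A1 :=
  .ofBijective (wordSum Sq1 Sq2) ⟨wordSum_injective, wordSum_surjective⟩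

instance finite : Module.Finite (ZMod 2) A1 := .equiv wordEquiv

lemma finrank_eq : Module.finrank (ZMod 2) A1 = 8 := by
  rw [← wordEquiv.finrank_eq, Module.finrank_fin_fun]

end A1

/-! ### The resolution over the enveloping algebra -/

section Enveloping

variable {R : Type*} [Ring R] [Algebra (ZMod 2) R]

/-- The image of `Sq¹` under the diagonal map `A(1) → R ⊗ Rᵐᵒᵖ` determined by `x`. -/
def diagSq1 (x : R) : R ⊗[ZMod 2] Rᵐᵒᵖ := x ⊗ₜ 1 + 1 ⊗ₜ op x

/-- The image of `Sq²` under the diagonal map `A(1) → R ⊗ Rᵐᵒᵖ` determined by `x` and `y`; the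
middle term is the one of the Cartan formula. -/
def diagSq2 (x y : R) : R ⊗[ZMod 2] Rᵐᵒᵖ := y ⊗ₜ 1 + x ⊗ₜ op x + 1 ⊗ₜ op y

namespace SteenrodPair

lemma diag {x y : R} (h : SteenrodPair x y) : SteenrodPair (diagSq1 x) (diagSq2 x y) where
  mul_self_left := by
    simp [diagSq1, mul_add, add_mul, h.mul_self_left, ← op_mul, ZModModule.add_self]
  mul_self_right := by
    have hyy := ZModModule.add_self (y ⊗ₜ[ZMod 2] op y)
    simp only [diagSq1, diagSq2, mul_add, add_mul, Algebra.TensorProduct.tmul_mul_tmul,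
      h.mul_self_left, h.mul_self_right, mul_assoc, mul_one, one_mul, ← op_mul, op_zero, tmul_zero,
      zero_tmul, add_zero, zero_add]
    grind

end SteenrodPair

end Enveloping

section Bimodule

variable (k A : Type*) [CommRing k] [Ring A] [Algebra k A]

/-- The algebra `A` as a module over its enveloping algebra, with the structure that appears in
`HochschildHomology`. -/
@[reducible] noncomputable def bimoduleSelf : Module (A ⊗[k] Aᵐᵒᵖ) A :=
  TensorProduct.Algebra.module

attribute [local instance] bimoduleSelf

variable {k A} in
lemma tmul_op_smul (a b c : A) : (a ⊗ₜ op b : A ⊗[k] Aᵐᵒᵖ) • c = a * (c * b) := rfl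

instance bimoduleSelf_isScalarTower : IsScalarTower k (A ⊗[k] Aᵐᵒᵖ) A :=
  ⟨fun r u c ↦ LinearMap.congr_fun (map_smul TensorProduct.Algebra.moduleAux r u) c⟩

end Bimodule

section Augmentation

variable {R : Type*} [Ring R] [Algebra (ZMod 2) R] {x y : R}

attribute [local instance] bimoduleSelf

/-- The augmentation `u ↦ u • 1` of the resolution of `R` over its enveloping algebra. -/
noncomputable def augmentation : (Cell 1 → R ⊗[ZMod 2] Rᵐᵒᵖ) →ₗ[R ⊗[ZMod 2] Rᵐᵒᵖ] R :=
  LinearMap.toSpanSingleton _ R 1 ∘ₗ LinearMap.proj (0 : Fin 1)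

lemma augmentation_apply (f : Cell 1 → R ⊗[ZMod 2] Rᵐᵒᵖ) :
    augmentation f = f (0 : Fin 1) • (1 : R) := rfl

lemma augmentation_surjective : Function.Surjective (augmentation (R := R)) := fun a ↦
  ⟨fun _ ↦ a ⊗ₜ op 1, by rw [augmentation_apply, tmul_op_smul, mul_one, mul_one]⟩

lemma diagSq1_smul_one (x : R) : diagSq1 x • (1 : R) = 0 := by
  simp only [diagSq1, add_smul, ← op_one, tmul_op_smul, mul_one, one_mul, ZModModule.add_self]

namespace SteenrodPair

lemma diagSq2_smul_one (h : SteenrodPair x y) : diagSq2 x y • (1 : R) = 0 := by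
  simp only [diagSq2, add_smul, ← op_one, tmul_op_smul, mul_one, one_mul, h.mul_self_left,
    add_zero, ZModModule.add_self]

end SteenrodPair

/-- The differential from degree `n` to degree `n - 1` of the free resolution of the bimodule
`R`. -/
noncomputable abbrev envelopingDiff (x y : R) (n : ℕ) :
    (Cell (n + 1) → R ⊗[ZMod 2] Rᵐᵒᵖ) →ₗ[R ⊗[ZMod 2] Rᵐᵒᵖ] (Cell n → R ⊗[ZMod 2] Rᵐᵒᵖ) :=
  Cell.diff (LinearMap.mulRight _ (diagSq1 x)) (LinearMap.mulRight _ (diagSq2 x y)) n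

lemma envelopingDiff_eq_diff (n : ℕ) (f : Cell (n + 1) → R ⊗[ZMod 2] Rᵐᵒᵖ) :
    envelopingDiff x y n f = Cell.diff (LinearMap.mulRight (ZMod 2) (diagSq1 x))
      (LinearMap.mulRight (ZMod 2) (diagSq2 x y)) n f :=
  Cell.diff_map (X := LinearMap.mulRight (ZMod 2) (diagSq1 x))
    (Y := LinearMap.mulRight (ZMod 2) (diagSq2 x y)) (AddMonoidHom.id (R ⊗[ZMod 2] Rᵐᵒᵖ))
    (fun _ ↦ rfl) (fun _ ↦ rfl) n f

variable (h : SteenrodPair x y) (C : Contraction (LinearMap.mulRight (ZMod 2) (diagSq1 x))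
  (LinearMap.mulRight (ZMod 2) (diagSq2 x y)))

include h C in
theorem exact_envelopingDiff (n : ℕ) :
    Function.Exact (envelopingDiff x y (n + 2)) (envelopingDiff x y (n + 1)) := by
  refine fun f ↦ ⟨fun hf ↦ ?_, ?_⟩
  · rw [envelopingDiff_eq_diff] at hf
    obtain ⟨g, hg⟩ := Cell.exists_diff_eq C n f hf
    exact ⟨g, by rw [envelopingDiff_eq_diff, hg]⟩
  · rintro ⟨g, rfl⟩
    exact Cell.diff_diff h.diag.mulRight (n + 1) g

variable (hC : ∀ u, C.e (u * diagSq2 x y * diagSq1 x * diagSq2 x y) = 1 ⊗ₜ op (u • (1 : R)))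

include h hC in
theorem exact_envelopingDiff_augmentation :
    Function.Exact (envelopingDiff x y 1) (augmentation (R := R)) := by
  refine fun f ↦ ⟨fun hf ↦ ?_, ?_⟩
  · have he := hC (f (0 : Fin 1))
    rw [← augmentation_apply, hf, MulOpposite.op_zero, tmul_zero] at he
    obtain ⟨g, hg⟩ := Cell.exists_diff_one_eq C f he
    exact ⟨g, by rw [envelopingDiff_eq_diff, hg]⟩
  · rintro ⟨g, rfl⟩
    rw [augmentation_apply, envelopingDiff, Cell.diff_one, LinearMap.mulRight_apply,
      LinearMap.mulRight_apply, add_smul, mul_smul, mul_smul, diagSq1_smul_one, h.diagSq2_smul_one,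
      smul_zero, smul_zero, add_zero]

/-- The free resolution of the bimodule `R` with the differentials `envelopingDiff`; the conditions
on `C` make it exact. -/
noncomputable def envelopingResolution {R : Type} [Ring R] [Algebra (ZMod 2) R] {x y : R}
    (h : SteenrodPair x y) (C : Contraction (LinearMap.mulRight (ZMod 2) (diagSq1 x))
      (LinearMap.mulRight (ZMod 2) (diagSq2 x y)))
    (hC : ∀ u, C.e (u * diagSq2 x y * diagSq1 x * diagSq2 x y) = 1 ⊗ₜ op (u • (1 : R))) :
    ProjectiveResolution (ModuleCat.of (R ⊗[ZMod 2] Rᵐᵒᵖ) R) :=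
  projectiveResolutionOfExact (M := fun n ↦ Cell (n + 1) → _) (exact_envelopingDiff h C)
    (exact_envelopingDiff_augmentation h C hC) augmentation_surjective

end Augmentation

namespace A1

local notation "Aᵉ" => A1 ⊗[ZMod 2] A1ᵐᵒᵖ

/-- The diagonal map `A(1) → A(1) ⊗ A(1)ᵒᵖ`, over which the enveloping algebra is free. -/
noncomputable def diag : A1 →ₐ[ZMod 2] Aᵉ := lift steenrodPair.diag

/-- The map exhibiting the enveloping algebra of `A(1)` as a free right module along `diag`. -/
noncomputable def mulDiag : A1ᵐᵒᵖ ⊗[ZMod 2] A1 →ₗ[ZMod 2] Aᵉ :=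
  LinearMap.mul' (ZMod 2) Aᵉ ∘ₗ
    TensorProduct.map Algebra.TensorProduct.includeRight.toLinearMap diag.toLinearMap

lemma mulDiag_tmul (b : A1ᵐᵒᵖ) (a : A1) : mulDiag (b ⊗ₜ a) = 1 ⊗ₜ b * diag a := rfl

lemma diag_Sq1 : diag Sq1 = diagSq1 Sq1 := lift_Sq1 _

lemma diag_Sq2 : diag Sq2 = diagSq2 Sq1 Sq2 := lift_Sq2 _

lemma Sq1_tmul_mul_mulDiag (b : A1ᵐᵒᵖ) (a : A1) : Sq1 ⊗ₜ 1 * mulDiag (b ⊗ₜ a) =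
    mulDiag (b ⊗ₜ (Sq1 * a) + (b * op Sq1) ⊗ₜ a) := by
  have hb : (Sq1 ⊗ₜ 1 : Aᵉ) * 1 ⊗ₜ b = 1 ⊗ₜ b * diagSq1 Sq1 + 1 ⊗ₜ (b * op Sq1) := by
    simp [diagSq1, mul_add, add_assoc, ZModModule.add_self]
  simp only [map_add, mulDiag_tmul, map_mul, diag_Sq1]
  rw [← mul_assoc, hb, add_mul, mul_assoc]

lemma Sq2_tmul_mul_mulDiag (b : A1ᵐᵒᵖ) (a : A1) : Sq2 ⊗ₜ 1 * mulDiag (b ⊗ₜ a) =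
    mulDiag (b ⊗ₜ (Sq2 * a) + (b * op Sq1) ⊗ₜ (Sq1 * a) + (b * op Sq2) ⊗ₜ a) := by
  have hb : (Sq2 ⊗ₜ 1 : Aᵉ) * 1 ⊗ₜ b =
      1 ⊗ₜ b * diagSq2 Sq1 Sq2 + 1 ⊗ₜ (b * op Sq1) * diagSq1 Sq1 + 1 ⊗ₜ (b * op Sq2) := by
    have h1 := ZModModule.add_self (Sq1 ⊗ₜ[ZMod 2] (b * op Sq1))
    have h2 := ZModModule.add_self ((1 : A1) ⊗ₜ[ZMod 2] (b * op Sq2))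
    simp only [diagSq1, diagSq2, mul_add, Algebra.TensorProduct.tmul_mul_tmul,
      steenrodPair.mul_self_left, mul_assoc, mul_one, one_mul, ← op_mul, op_zero, mul_zero,
      tmul_zero, add_zero]
    grind
  simp only [map_add, mulDiag_tmul, map_mul, diag_Sq1, diag_Sq2]
  rw [← mul_assoc, hb, add_mul, add_mul, mul_assoc, mul_assoc]

lemma mul_mem_range_mulDiag {z : Aᵉ} (hz : ∀ b a, z * mulDiag (b ⊗ₜ a) ∈ LinearMap.range mulDiag) :
    ∀ u ∈ LinearMap.range mulDiag, z * u ∈ LinearMap.range mulDiag := by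
  rintro _ ⟨w, rfl⟩
  induction w with
  | zero => simp
  | tmul b a => exact hz b a
  | add v w hv hw => rw [map_add, mul_add]; exact Submodule.add_mem _ hv hw

lemma mulDiag_surjective : Function.Surjective mulDiag := by
  rw [← LinearMap.range_eq_top, eq_top_iff, ← span_tmul_eq_top, Submodule.span_le]
  rintro _ ⟨a, b, rfl⟩
  have hb : 1 ⊗ₜ b ∈ LinearMap.range mulDiag := ⟨b ⊗ₜ 1, by rw [mulDiag_tmul, map_one, mul_one]⟩
  have hsmul (a : A1) (u : Aᵉ) : a • u = a ⊗ₜ 1 * u := by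
    rw [← smul_one_mul, Algebra.TensorProduct.one_def, smul_tmul', smul_eq_mul, mul_one]
  have hab : a • (1 : A1) ⊗ₜ b ∈ LinearMap.range mulDiag := by
    refine smul_mem ?_ ?_ a hb <;> simp only [hsmul]
    · exact mul_mem_range_mulDiag fun _ _ ↦ ⟨_, (Sq1_tmul_mul_mulDiag _ _).symm⟩
    · exact mul_mem_range_mulDiag fun _ _ ↦ ⟨_, (Sq2_tmul_mul_mulDiag _ _).symm⟩
  rwa [smul_tmul', smul_eq_mul, mul_one] at hab

lemma mulDiag_bijective : Function.Bijective mulDiag := by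
  have : Module.Finite (ZMod 2) A1ᵐᵒᵖ := .equiv (opLinearEquiv (ZMod 2))
  let e : A1ᵐᵒᵖ ⊗[ZMod 2] A1 ≃ₗ[ZMod 2] Aᵉ := .ofFinrankEq _ _ <| by
    rw [Module.finrank_tensorProduct, Module.finrank_tensorProduct, mul_comm]
  exact ⟨OrzechProperty.injective_of_surjective_of_injective e.toLinearMap mulDiag e.injective
    mulDiag_surjective, mulDiag_surjective⟩

/-- The coordinates on the enveloping algebra of `A(1)` coming from its freeness along `diag` and
the words in `A(1)`. -/
noncomputable def envelopingEquiv : A1ᵐᵒᵖ ⊗[ZMod 2] (Fin 8 → ZMod 2) ≃ₗ[ZMod 2] Aᵉ :=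
  wordEquiv.lTensor A1ᵐᵒᵖ ≪≫ₗ .ofBijective mulDiag mulDiag_bijective

lemma envelopingEquiv_tmul (b : A1ᵐᵒᵖ) (v : Fin 8 → ZMod 2) :
    envelopingEquiv (b ⊗ₜ v) = 1 ⊗ₜ b * wordSum (diagSq1 Sq1) (diagSq2 Sq1 Sq2) v := by
  rw [← diag_Sq1, ← diag_Sq2, ← map_wordSum]
  rfl

/-- The extension of scalars along `diag` of endomorphisms of `A(1)` in coordinates. -/
noncomputable def extendEnd :
    Module.End (ZMod 2) (Fin 8 → ZMod 2) →+* Module.End (ZMod 2) Aᵉ :=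
  (envelopingEquiv.conjAlgEquiv (ZMod 2)).toRingEquiv.toRingHom.comp <|
    (Module.endTensorEndAlgHom (S := ZMod 2)).toRingHom.comp
      (Algebra.TensorProduct.includeRight (R := ZMod 2)
        (A := Module.End (ZMod 2) A1ᵐᵒᵖ)).toRingHom

lemma extendEnd_envelopingEquiv (f : Module.End (ZMod 2) (Fin 8 → ZMod 2)) (b : A1ᵐᵒᵖ)
    (v : Fin 8 → ZMod 2) :
    extendEnd f (envelopingEquiv (b ⊗ₜ v)) = envelopingEquiv (b ⊗ₜ f v) := by
  change envelopingEquiv (TensorProduct.map 1 f (envelopingEquiv.symm _)) = _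
  rw [LinearEquiv.symm_apply_apply, TensorProduct.map_tmul, Module.End.one_apply]

@[elab_as_elim]
lemma enveloping_induction {motive : Aᵉ → Prop} (u : Aᵉ)
    (tmul : ∀ b v, motive (envelopingEquiv (b ⊗ₜ v)))
    (add : ∀ u v, motive u → motive v → motive (u + v)) : motive u := by
  obtain ⟨w, rfl⟩ := envelopingEquiv.surjective u
  induction w with
  | zero => simpa using tmul 0 0
  | tmul b v => exact tmul b v
  | add v w hv hw => rw [map_add]; exact add _ _ hv hw

lemma extendEnd_eq_mulRight {f : Module.End (ZMod 2) (Fin 8 → ZMod 2)} {z : Aᵉ}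
    (hf : ∀ v, wordSum (diagSq1 Sq1) (diagSq2 Sq1 Sq2) (f v) =
      wordSum (diagSq1 Sq1) (diagSq2 Sq1 Sq2) v * z) :
    extendEnd f = LinearMap.mulRight (ZMod 2) z := by
  refine LinearMap.ext fun u ↦ ?_
  induction u using enveloping_induction with
  | tmul b v =>
    rw [extendEnd_envelopingEquiv, LinearMap.mulRight_apply, envelopingEquiv_tmul, hf,
      envelopingEquiv_tmul, mul_assoc]
  | add u v hu hv => rw [map_add, map_add, hu, hv]

local notation "sx" => diagSq1 Sq1
local notation "sy" => diagSq2 Sq1 Sq2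

lemma extendEnd_mulRightSq1 : extendEnd Coord.mulRightSq1 = LinearMap.mulRight (ZMod 2) sx :=
  extendEnd_eq_mulRight (Coord.wordSum_mulRightSq1 steenrodPair.diag)

lemma extendEnd_mulRightSq2 : extendEnd Coord.mulRightSq2 = LinearMap.mulRight (ZMod 2) sy :=
  extendEnd_eq_mulRight (Coord.wordSum_mulRightSq2 steenrodPair.diag)

/-- A contraction of the resolution of `A(1)` over its enveloping algebra. -/
noncomputable def envelopingContraction :
    Contraction (LinearMap.mulRight (ZMod 2) sx) (LinearMap.mulRight (ZMod 2) sy) :=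
  Coord.contraction.map extendEnd extendEnd_mulRightSq1 extendEnd_mulRightSq2

attribute [local instance] bimoduleSelf

lemma envelopingEquiv_tmul_smul_one (b : A1ᵐᵒᵖ) (v : Fin 8 → ZMod 2) :
    envelopingEquiv (b ⊗ₜ v) • (1 : A1) = v 0 • unop b := by
  rw [envelopingEquiv_tmul, mul_smul, wordSum_smul_of_smul_eq_zero
    (diagSq1_smul_one Sq1) steenrodPair.diagSq2_smul_one, ← op_unop b, smul_comm, tmul_op_smul]
  simp

lemma envelopingContraction_e_word (u : Aᵉ) :
    envelopingContraction.e (u * sy * sx * sy) = 1 ⊗ₜ op (u • (1 : A1)) := by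
  induction u using enveloping_induction with
  | tmul b v =>
    change extendEnd _ (LinearMap.mulRight (ZMod 2) sy (LinearMap.mulRight (ZMod 2) sx
      (LinearMap.mulRight (ZMod 2) sy _))) = _
    rw [← extendEnd_mulRightSq1, ← extendEnd_mulRightSq2]
    simp only [extendEnd_envelopingEquiv, Coord.contraction_e_word]
    rw [envelopingEquiv_tmul_smul_one, envelopingEquiv_tmul]
    simp [wordSum_apply]
  | add u v hu hv =>
    rw [add_mul, add_mul, add_mul, map_add, hu, hv, add_smul, MulOpposite.op_add, tmul_add]

end A1

/-! ### Coinvariants -/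

section MulSwap

variable {k A : Type*} [CommRing k] [Ring A] [Algebra k A]

/-- The product `a ⊗ b ↦ b * a`, which identifies the coinvariants of the enveloping algebra
with `A`. -/
noncomputable def mulSwap : A ⊗[k] Aᵐᵒᵖ →ₗ[k] A :=
  LinearMap.mul' k A ∘ₗ (opLinearEquiv k).symm.toLinearMap.rTensor A ∘ₗ
    (TensorProduct.comm k A Aᵐᵒᵖ).toLinearMap

lemma mulSwap_tmul (a : A) (b : Aᵐᵒᵖ) : mulSwap (a ⊗ₜ[k] b) = unop b * a := rfl

lemma mulSwap_tmul_one_mul (a : A) (u : A ⊗[k] Aᵐᵒᵖ) :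
    mulSwap (a ⊗ₜ 1 * u) = mulSwap (1 ⊗ₜ op a * u) := by
  induction u with
  | zero => simp
  | tmul c d => simp [mulSwap_tmul, mul_assoc]
  | add u v hu hv => rw [mul_add, mul_add, map_add, map_add, hu, hv]

end MulSwap

section Adjoint

variable {R : Type*} [Ring R] [Algebra (ZMod 2) R]

/-- The operator on the coinvariants induced by right multiplication by `diagSq1 x`; it is the
adjoint action of `Sq¹` on `R`. -/
def adSq1 (x : R) : Module.End (ZMod 2) R :=
  LinearMap.mulLeft (ZMod 2) x + LinearMap.mulRight (ZMod 2) x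

/-- The operator on the coinvariants induced by right multiplication by `diagSq2 x y`; it is the
adjoint action of `Sq²` on `R`. -/
def adSq2 (x y : R) : Module.End (ZMod 2) R :=
  LinearMap.mulLeft (ZMod 2) y + LinearMap.mulLeft (ZMod 2) x * LinearMap.mulRight (ZMod 2) x +
    LinearMap.mulRight (ZMod 2) y

lemma mulSwap_mul_tmul (u : R ⊗[ZMod 2] Rᵐᵒᵖ) (a b : R) :
    mulSwap (u * a ⊗ₜ op b) = b * mulSwap u * a := by
  induction u with
  | zero => simp
  | tmul c d => simp [mulSwap_tmul, mul_assoc]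
  | add u v hu hv => rw [add_mul, map_add, map_add, hu, hv, mul_add, add_mul]

lemma mulSwap_mul_diagSq1 (x : R) (u : R ⊗[ZMod 2] Rᵐᵒᵖ) :
    mulSwap (u * diagSq1 x) = adSq1 x (mulSwap u) := by
  simp only [diagSq1, adSq1, ← op_one, mul_add, map_add, mulSwap_mul_tmul, LinearMap.add_apply,
    LinearMap.mulLeft_apply, LinearMap.mulRight_apply, one_mul, mul_one]
  exact add_comm _ _

lemma mulSwap_mul_diagSq2 (x y : R) (u : R ⊗[ZMod 2] Rᵐᵒᵖ) :
    mulSwap (u * diagSq2 x y) = adSq2 x y (mulSwap u) := by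
  simp only [diagSq2, adSq2, ← op_one, mul_add, map_add, mulSwap_mul_tmul, LinearMap.add_apply,
    Module.End.mul_apply, LinearMap.mulLeft_apply, LinearMap.mulRight_apply, one_mul, mul_one,
    mul_assoc]
  abel

end Adjoint

section Coinvariants

variable {k A ι : Type} [CommRing k] [Ring A] [Algebra k A]

/-- The pairs whose coequalisation defines the coinvariants in `HochschildHomology`. -/
abbrev bimoduleRel (k A : Type) [CommRing k] [Ring A] [Algebra k A] :
    Set ((A ⊗[k] Aᵐᵒᵖ) × (A ⊗[k] Aᵐᵒᵖ)) :=
  {p | ∃ a : A, p = (a ⊗ₜ[k] (1 : Aᵐᵒᵖ), (1 : A) ⊗ₜ[k] op a)}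

variable (k A ι) in
/-- `mulSwap` in each coordinate, with scalars restricted along `k → A ⊗ Aᵐᵒᵖ`. -/
noncomputable def mulSwapPi :
    (ModuleCat.restrictScalars (algebraMap k (A ⊗[k] Aᵐᵒᵖ))).obj
      (ModuleCat.of (A ⊗[k] Aᵐᵒᵖ) (ι → A ⊗[k] Aᵐᵒᵖ)) →ₗ[k] (ι → A) where
  toFun (f : ι → A ⊗[k] Aᵐᵒᵖ) i := mulSwap (f i)
  map_add' _ _ := funext fun _ ↦ map_add _ _ _
  map_smul' r (f : ι → A ⊗[k] Aᵐᵒᵖ) := funext fun i ↦ by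
    change mulSwap (algebraMap k (A ⊗[k] Aᵐᵒᵖ) r * f i) = r • mulSwap (f i)
    rw [← Algebra.smul_def, map_smul]

lemma mulSwapPi_apply (f : ι → A ⊗[k] Aᵐᵒᵖ) : mulSwapPi k A ι f = mulSwap ∘ f := rfl

lemma mulSwapPi_surjective : Function.Surjective (mulSwapPi k A ι) := fun g ↦
  ⟨fun i ↦ 1 ⊗ₜ op (g i), funext fun i ↦ by simp [mulSwapPi_apply, mulSwap_tmul]⟩

lemma single_sub_single_mem_relSub [DecidableEq ι] (i : ι) (u : A ⊗[k] Aᵐᵒᵖ) :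
    (Pi.single i u - Pi.single i (1 ⊗ₜ op (mulSwap u)) : ι → A ⊗[k] Aᵐᵒᵖ) ∈
      relSub k (A ⊗[k] Aᵐᵒᵖ) (bimoduleRel k A) (ModuleCat.of _ (ι → A ⊗[k] Aᵐᵒᵖ)) := by
  induction u with
  | zero =>
    rw [map_zero, MulOpposite.op_zero, tmul_zero, sub_self]
    exact Submodule.zero_mem _
  | tmul a b =>
    refine Submodule.subset_span ⟨_, ⟨a, rfl⟩, Pi.single i (1 ⊗ₜ b), ?_⟩
    dsimp only
    rw [← Pi.single_smul, ← Pi.single_smul]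
    simp only [mulSwap_tmul, op_mul, op_unop, smul_eq_mul, Algebra.TensorProduct.tmul_mul_tmul,
      mul_one, one_mul]
    rfl
  | add u v hu hv =>
    rw [map_add, MulOpposite.op_add, tmul_add, Pi.single_add, Pi.single_add, add_sub_add_comm]
    exact Submodule.add_mem _ hu hv

lemma ker_mulSwapPi [Finite ι] : LinearMap.ker (mulSwapPi k A ι) =
    relSub k (A ⊗[k] Aᵐᵒᵖ) (bimoduleRel k A) (ModuleCat.of _ (ι → A ⊗[k] Aᵐᵒᵖ)) := by
  classical
  have := Fintype.ofFinite ι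
  refine le_antisymm (fun (f : ι → A ⊗[k] Aᵐᵒᵖ) hf ↦ ?_) (Submodule.span_le.2 ?_)
  · have hf' (i : ι) : mulSwap (f i) = 0 := congrFun hf i
    have hsum : f = ∑ i, (Pi.single i (f i) - Pi.single i (1 ⊗ₜ op (mulSwap (f i)))) := by
      simp [hf', Finset.univ_sum_single]
    rw [hsum]
    exact Submodule.sum_mem _ fun i _ ↦ single_sub_single_mem_relSub i (f i)
  · rintro _ ⟨_, ⟨a, rfl⟩, f, rfl⟩
    refine funext fun i ↦ ?_
    change mulSwap (a ⊗ₜ 1 * f i - 1 ⊗ₜ op a * f i) = 0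
    rw [map_sub, mulSwap_tmul_one_mul, sub_self]

variable (k A ι) in
/-- The coinvariants of a free bimodule of finite rank. -/
noncomputable def coinvPiEquiv [Finite ι] :
    (coinvFunctor k (A ⊗[k] Aᵐᵒᵖ) (bimoduleRel k A)).obj
      (ModuleCat.of _ (ι → A ⊗[k] Aᵐᵒᵖ)) ≃ₗ[k] (ι → A) :=
  Submodule.quotEquivOfEq _ _ ker_mulSwapPi.symm ≪≫ₗ
    (mulSwapPi k A ι).quotKerEquivOfSurjective mulSwapPi_surjective

end Coinvariants

/-! ### Periodicity -/

section Periodicity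

open Module

attribute [local instance] bimoduleSelf

variable {R : Type} [Ring R] [Algebra (ZMod 2) R] {x y : R}
  (h : SteenrodPair x y) (C : Contraction (LinearMap.mulRight (ZMod 2) (diagSq1 x))
    (LinearMap.mulRight (ZMod 2) (diagSq2 x y)))
  (hC : ∀ u, C.e (u * diagSq2 x y * diagSq1 x * diagSq2 x y) = 1 ⊗ₜ op (u • (1 : R)))

/-- The complex of coinvariants of `envelopingResolution`. -/
noncomputable def hochschildComplex : ChainComplex (ModuleCat (ZMod 2)) ℕ :=
  ((coinvFunctor (ZMod 2) (R ⊗[ZMod 2] Rᵐᵒᵖ) (bimoduleRel (ZMod 2) R)).mapHomologicalComplex _).obj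
    (envelopingResolution h C hC).complex

/-- The coordinates on the terms of `hochschildComplex`, one in `R` for each generator of the
resolution. -/
noncomputable def hochschildComplexXEquiv (n : ℕ) :
    (hochschildComplex h C hC).X n ≃ₗ[ZMod 2] (Cell (n + 1) → R) :=
  coinvPiEquiv (ZMod 2) R (Cell (n + 1))

lemma hochschildComplexXEquiv_d (n : ℕ) (c : (hochschildComplex h C hC).X (n + 1)) :
    hochschildComplexXEquiv h C hC n ((hochschildComplex h C hC).d (n + 1) n c) =
      Cell.diff (adSq1 x) (adSq2 x y) (n + 1) (hochschildComplexXEquiv h C hC (n + 1) c) := by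
  have hd : (hochschildComplex h C hC).d (n + 1) n =
      (coinvFunctor (ZMod 2) (R ⊗[ZMod 2] Rᵐᵒᵖ) (bimoduleRel (ZMod 2) R)).map
        (ModuleCat.ofHom (envelopingDiff x y (n + 1))) := by
    rw [← complexOfExact_d (M := fun n ↦ Cell (n + 1) → _) (exact_envelopingDiff h C) n]
    rfl
  obtain ⟨f, rfl⟩ := Submodule.mkQ_surjective _ c
  rw [hd]
  exact (Cell.diff_map (mulSwap (k := ZMod 2) (A := R)).toAddMonoidHom (mulSwap_mul_diagSq1 x)
    (mulSwap_mul_diagSq2 x y) (n + 1) f).symm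

lemma finrank_hochschildHomology (n : ℕ) :
    finrank (ZMod 2) (HochschildHomology (ZMod 2) R n) =
      finrank (ZMod 2) ((hochschildComplex h C hC).homology n) :=
  ((envelopingResolution h C hC).isoLeftDerivedObj
    (coinvFunctor (ZMod 2) _ (bimoduleRel (ZMod 2) R)) n).toLinearEquiv.finrank_eq

include h C hC

lemma finrank_hochschildHomology_add [Module.Finite (ZMod 2) R] (n : ℕ) :
    finrank (ZMod 2) (HochschildHomology (ZMod 2) R n) +
      finrank (ZMod 2) (LinearMap.range (Cell.diff (adSq1 x) (adSq2 x y) (n + 1))) +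
      finrank (ZMod 2) (LinearMap.range (Cell.diff (adSq1 x) (adSq2 x y) n)) =
        finrank (ZMod 2) (Cell (n + 1) → R) := by
  rw [finrank_hochschildHomology h C hC]
  exact finrank_homology_add_of_equiv (M := fun n ↦ Cell n → R) (hochschildComplexXEquiv h C hC)
    (hochschildComplexXEquiv_d h C hC) n

theorem finrank_hochschildHomology_add_four [Module.Finite (ZMod 2) R]
    (had : adSq2 x y * adSq1 x = 0) (n : ℕ) :
    finrank (ZMod 2) (HochschildHomology (ZMod 2) R (n + 4)) +
        4 * finrank (ZMod 2) (LinearMap.range (adSq1 x)) =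
      finrank (ZMod 2) (HochschildHomology (ZMod 2) R n) + 2 * finrank (ZMod 2) R := by
  have hn := finrank_hochschildHomology_add h C hC n
  have hn4 := finrank_hochschildHomology_add h C hC (n + 4)
  have hdim : finrank (ZMod 2) (Cell (n + 4 + 1) → R) = _ := Cell.finrank_arrow_add_four (n + 1)
  have hrank := Cell.finrank_range_diff_add_four had n
  have hrank_succ : finrank (ZMod 2) (LinearMap.range
      (Cell.diff (adSq1 x) (adSq2 x y) (n + 4 + 1))) = _ :=
    Cell.finrank_range_diff_add_four had (n + 1)
  omega

end Periodicity

namespace Coord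

open LinearMap

/-- The adjoint action of `Sq¹` on `A(1)`, in the coordinates of `wordSum`. -/
def adSq1 : Module.End (ZMod 2) (Fin 8 → ZMod 2) := mulLeftSq1 + mulRightSq1

/-- The adjoint action of `Sq²` on `A(1)`, in the coordinates of `wordSum`. -/
def adSq2 : Module.End (ZMod 2) (Fin 8 → ZMod 2) :=
  mulLeftSq2 + mulLeftSq1 * mulRightSq1 + mulRightSq2

lemma adSq2_mul_adSq1 : adSq2 * adSq1 = 0 := LinearMap.ext fun v ↦ funext <| by
  simp [adSq1, adSq2, mulLeftSq1, mulLeftSq2, mulRightSq1, mulRightSq2, Fin.forall_fin_succ,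
    ZModModule.add_self]

lemma finrank_range_adSq1 : Module.finrank (ZMod 2) (range adSq1) = 2 := by
  let q (j : Fin 8) : (Fin 8 → ZMod 2) →ₗ[ZMod 2] ZMod 2 := proj j
  let p : (Fin 8 → ZMod 2) →ₗ[ZMod 2] Fin 2 → ZMod 2 := pi ![q 2, q 4 + q 3]
  let i : (Fin 2 → ZMod 2) →ₗ[ZMod 2] Fin 8 → ZMod 2 :=
    pi ![0, 0, 0, proj 0, proj 0, proj 1, 0, 0]
  have hp : Function.Surjective p := fun w ↦
    ⟨![0, 0, w 0, w 1, 0, 0, 0, 0], funext <| by simp [p, q, Fin.forall_fin_two]⟩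
  have hi : Function.Injective i := fun v w hvw ↦
    funext (Fin.forall_fin_two.2 ⟨congrFun hvw 3, congrFun hvw 5⟩)
  have hip : adSq1 = i ∘ₗ p := LinearMap.ext fun v ↦ funext <| by
    simp [adSq1, mulLeftSq1, mulRightSq1, i, p, q, Fin.forall_fin_succ, ZModModule.add_self]
  rw [hip, finrank_range_comp_eq hi hp, Module.finrank_fin_fun]

end Coord

namespace A1

lemma adSq1_wordEquiv (v : Fin 8 → ZMod 2) :
    adSq1 Sq1 (wordEquiv v) = wordEquiv (Coord.adSq1 v) := by
  change adSq1 Sq1 (wordSum Sq1 Sq2 v) = wordSum Sq1 Sq2 (Coord.adSq1 v)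
  simp only [adSq1, Coord.adSq1, LinearMap.add_apply, map_add,
    Coord.wordSum_mulLeftSq1 steenrodPair, Coord.wordSum_mulRightSq1 steenrodPair,
    LinearMap.mulLeft_apply, LinearMap.mulRight_apply]

lemma adSq2_wordEquiv (v : Fin 8 → ZMod 2) :
    adSq2 Sq1 Sq2 (wordEquiv v) = wordEquiv (Coord.adSq2 v) := by
  change adSq2 Sq1 Sq2 (wordSum Sq1 Sq2 v) = wordSum Sq1 Sq2 (Coord.adSq2 v)
  simp only [adSq2, Coord.adSq2, LinearMap.add_apply, map_add, Module.End.mul_apply,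
    Coord.wordSum_mulLeftSq1 steenrodPair, Coord.wordSum_mulRightSq1 steenrodPair,
    Coord.wordSum_mulLeftSq2 steenrodPair, Coord.wordSum_mulRightSq2 steenrodPair,
    LinearMap.mulLeft_apply, LinearMap.mulRight_apply]

lemma adSq2_mul_adSq1 : adSq2 Sq1 Sq2 * adSq1 Sq1 = 0 := by
  refine LinearMap.ext fun a ↦ ?_
  obtain ⟨v, rfl⟩ := wordEquiv.surjective a
  rw [Module.End.mul_apply, adSq1_wordEquiv, adSq2_wordEquiv, ← Module.End.mul_apply,
    Coord.adSq2_mul_adSq1, LinearMap.zero_apply, map_zero, LinearMap.zero_apply]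

lemma finrank_range_adSq1 : Module.finrank (ZMod 2) (LinearMap.range (adSq1 Sq1)) = 2 := by
  have hcomp : adSq1 Sq1 ∘ₗ wordEquiv.toLinearMap = wordEquiv.toLinearMap ∘ₗ Coord.adSq1 :=
    LinearMap.ext adSq1_wordEquiv
  rw [← LinearEquiv.range_comp wordEquiv (adSq1 Sq1), hcomp, LinearMap.range_comp,
    wordEquiv.finrank_map_eq, Coord.finrank_range_adSq1]

end A1

/-- The Hochschild homology of `A(1)` is periodic of period 4 up to a shift of 8 in dimension:
`dim HH_{n+4}(A(1), A(1)) = dim HH_n(A(1), A(1)) + 8`. -/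
theorem hochschildHomology_A1_periodicity (n : ℕ) :
    Module.finrank (ZMod 2) (HochschildHomology (ZMod 2) A1 (n + 4)) =
      Module.finrank (ZMod 2) (HochschildHomology (ZMod 2) A1 n) + 8 := by
  have hperiod := finrank_hochschildHomology_add_four A1.steenrodPair A1.envelopingContraction
    A1.envelopingContraction_e_word A1.adSq2_mul_adSq1 n
  rw [A1.finrank_range_adSq1, A1.finrank_eq] at hperiod
  omega
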